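/- Let n be a positive integer and b = −n + i ∈ ℤ[i]. Every complex number z admits a radix expansion in base b: there exist an integer ℓ ≥ 0 and digits d_k ∈ {0, 1, ..., n²} (= {0,...,|b|²−1}) for k ≤ ℓ such that z = d_ℓ b^ℓ + d_{ℓ−1} b^{ℓ−1} + ⋯ + d_0 + ∑_{k=1}^∞ d_{−k} b^{−k}. -/

import Mathlib

open Filter Topology

/-!
Write `b = -n + i`. The Gaussian integers are the values `f(b)` of polynomials `f` with natural
number coefficients, since `i = b + n` and `-1 = i ^ 2`. The identity
`(X - 1) (X² + 2nX + n² + 1) = X g - (n² + 1)` with `g = X² + (2n - 1) X + (n - 1)²` shows that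
`n² + 1 = b g(b)` and `n² + 1 = g(1)`, so carrying multiples of `n² + 1` out of the constant
coefficient of `f` changes neither its value at `b` nor its coefficient sum. Splitting off a nonzero
lowest digit then decreases the coefficient sum, while splitting off a zero digit divides the value
by the nonunit `b`. Neither can go on forever, so every Gaussian integer has a finite expansion.

The fractions `∑ dⱼ b⁻ʲ⁻¹` form a compact set `T`, the continuous image of a product of finite sets,
so `ℤ[i] + T` is closed. It is stable under division by `b`, because a Gaussian integer is a digit
plus a multiple of `b`, and it comes within bounded distance of every point. Scaling by `b⁻ᵏ` shows
that it is dense, hence all of `ℂ`.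
-/

section IntegerPart

open Polynomial

variable {R : Type*} [CommSemiring R] {b : R} {B : ℕ} {g : ℕ[X]}

lemma exists_aeval_eq_natCast_add_mul (hB : 0 < B) (hg : b * aeval b g = B)
    (hg_one : g.eval 1 ≤ B) (f : ℕ[X]) :
    ∃ r < B, ∃ f' : ℕ[X], aeval b f = r + b * aeval b f' ∧ r + f'.eval 1 ≤ f.eval 1 := by
  set q := f.coeff 0 / B
  set r := f.coeff 0 % B
  have hqr : f.coeff 0 = r + B * q := (Nat.mod_add_div _ _).symm
  have hf : f = X * f.divX + C (r + B * q) := by rw [← hqr, X_mul_divX_add]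
  refine ⟨r, Nat.mod_lt _ hB, f.divX + C q * g, ?_, ?_⟩
  · calc aeval b f = b * aeval b f.divX + (r + B * q) := by
          conv_lhs => rw [hf]
          simp
      _ = r + b * aeval b (f.divX + C q * g) := by
          rw [← hg]
          simp only [map_add, map_mul, eq_natCast, map_natCast]
          ring
  · calc r + (f.divX + C q * g).eval 1 = f.divX.eval 1 + (r + g.eval 1 * q) := by
          simp only [eval_add, eval_mul, eval_C]
          ring
      _ ≤ f.divX.eval 1 + (r + B * q) := by gcongr
      _ = f.eval 1 := by
          conv_rhs => rw [hf]
          simp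

theorem exists_coeff_lt_aeval_eq [WfDvdMonoid R] (hb : ¬IsUnit b) (hB : 0 < B)
    (hg : b * aeval b g = B) (hg_one : g.eval 1 ≤ B) (f : ℕ[X]) :
    ∃ p : ℕ[X], (∀ k, p.coeff k < B) ∧ aeval b p = aeval b f := by
  induction f using (InvImage.wf (fun f : ℕ[X] ↦ (f.eval 1, aeval b f))
    (wellFounded_lt.prod_lex wellFounded_dvdNotUnit)).induction with
  | _ f ih =>
  by_cases hf : aeval b f = 0
  · exact ⟨0, fun _ ↦ by simpa using hB, by rw [hf, map_zero]⟩
  obtain ⟨r, hr, f', hff', hsum⟩ := exists_aeval_eq_natCast_add_mul hB hg hg_one f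
  obtain ⟨p, hp, hpf'⟩ : ∃ p : ℕ[X], (∀ k, p.coeff k < B) ∧ aeval b p = aeval b f' := by
    apply ih f'
    obtain rfl | hr_pos := r.eq_zero_or_pos
    · have hmul : aeval b f = aeval b f' * b := by simpa [mul_comm] using hff'
      have hf' : aeval b f' ≠ 0 := left_ne_zero_of_mul (hmul ▸ hf)
      obtain hlt | heq := (show f'.eval 1 ≤ f.eval 1 by omega).lt_or_eq
      · exact .left _ _ hlt
      · exact Prod.lex_def.2 (.inr ⟨heq, hf', b, hb, hmul⟩)
    · exact .left _ _ (by omega)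
  refine ⟨X * p + C r, fun k ↦ ?_, ?_⟩
  · cases k with
    | zero => simpa using hr
    | succ k => simpa [coeff_C_succ] using hp k
  · simp [hff', hpf', add_comm]

end IntegerPart

section FractionalPart

open scoped Pointwise

variable {K : Type*} [NormedField K] {b : K} {D S Γ : Set K}

/-- The value `∑ dⱼ b⁻ʲ⁻¹` of the fraction in base `b` whose digits after the radix point are
`d 0, d 1, …`. It is the junk value `0` if the series diverges. -/
noncomputable def fracOfDigits (b : K) (d : ℕ → K) : K :=
  ∑' j : ℕ, d j * b⁻¹ ^ (j + 1)

/-- The fundamental tile of base `b` and digit set `D`: the set of all fractions in base `b` with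
digits in `D`. -/
def radixTile (b : K) (D : Set K) : Set K :=
  fracOfDigits b '' {d | ∀ j, d j ∈ D}

lemma norm_inv_lt_one (hb : 1 < ‖b‖) : ‖b⁻¹‖ < 1 := by
  rw [norm_inv]
  exact inv_lt_one_of_one_lt₀ hb

lemma norm_digit_mul_inv_pow_le {C : ℝ} (hC : ∀ x ∈ D, ‖x‖ ≤ C) {d : ℕ → K}
    (hd : ∀ j, d j ∈ D) (j : ℕ) : ‖d j * b⁻¹ ^ (j + 1)‖ ≤ C * ‖b⁻¹‖ ^ (j + 1) := by
  rw [norm_mul, norm_pow]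
  gcongr
  exact hC _ (hd j)

lemma summable_mul_norm_inv_pow_succ (hb : 1 < ‖b‖) (C : ℝ) :
    Summable fun j : ℕ ↦ C * ‖b⁻¹‖ ^ (j + 1) :=
  ((summable_nat_add_iff 1).2
    (summable_geometric_of_lt_one (norm_nonneg _) (norm_inv_lt_one hb))).mul_left C

lemma eq_univ_of_isClosed_of_inv_mul_mem (hb : 1 < ‖b‖) (hS : IsClosed S)
    (hS_inv_mul : ∀ s ∈ S, b⁻¹ * s ∈ S) {C : ℝ} (hC : ∀ z, ∃ s ∈ S, dist s z ≤ C) :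
    S = Set.univ := by
  refine Set.eq_univ_of_forall fun z ↦ ?_
  have hb0 : b ≠ 0 := norm_pos_iff.1 (one_pos.trans hb)
  choose s hs hdist using fun k : ℕ ↦ hC (b ^ k * z)
  have hmem (k : ℕ) : ∀ x ∈ S, b⁻¹ ^ k * x ∈ S := by
    induction k with
    | zero => simp
    | succ k ih =>
      intro x hx
      rw [pow_succ, mul_assoc]
      exact ih _ (hS_inv_mul x hx)
  have hdist_le (k : ℕ) : dist (b⁻¹ ^ k * s k) z ≤ ‖b⁻¹‖ ^ k * C :=
    calc dist (b⁻¹ ^ k * s k) z = ‖b⁻¹ ^ k * (s k - b ^ k * z)‖ := by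
          rw [dist_eq_norm, mul_sub, ← mul_assoc, ← mul_pow, inv_mul_cancel₀ hb0, one_pow, one_mul]
      _ = ‖b⁻¹‖ ^ k * dist (s k) (b ^ k * z) := by rw [norm_mul, norm_pow, dist_eq_norm]
      _ ≤ ‖b⁻¹‖ ^ k * C := by gcongr; exact hdist k
  have hzero : Tendsto (fun k ↦ ‖b⁻¹‖ ^ k * C) atTop (𝓝 0) := by
    simpa using (tendsto_pow_atTop_nhds_zero_of_lt_one (norm_nonneg _)
      (norm_inv_lt_one hb)).mul_const C
  have hlim : Tendsto (fun k ↦ b⁻¹ ^ k * s k) atTop (𝓝 z) :=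
    tendsto_iff_dist_tendsto_zero.2 (squeeze_zero (fun _ ↦ dist_nonneg) hdist_le hzero)
  exact hS.mem_of_tendsto hlim (.of_forall fun k ↦ hmem k _ (hs k))

variable [CompleteSpace K]

lemma isCompact_radixTile (hb : 1 < ‖b‖) (hD : IsCompact D) : IsCompact (radixTile b D) := by
  obtain ⟨C, hC⟩ := hD.isBounded.exists_norm_le
  exact (isCompact_pi_infinite fun _ ↦ hD).image_of_continuousOn <|
    continuousOn_tsum (fun j ↦ by fun_prop) (summable_mul_norm_inv_pow_succ hb C)
      fun j _ hd ↦ norm_digit_mul_inv_pow_le hC hd j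

lemma inv_mul_add_mem_radixTile (hb : 1 < ‖b‖) (hD : Bornology.IsBounded D) {x t : K}
    (hx : x ∈ D) (ht : t ∈ radixTile b D) : b⁻¹ * (x + t) ∈ radixTile b D := by
  obtain ⟨d, hd, rfl⟩ := ht
  obtain ⟨C, hC⟩ := hD.exists_norm_le
  let e : ℕ → K := fun j ↦ j.casesOn x d
  have he : ∀ j, e j ∈ D := by rintro (_ | j); exacts [hx, hd j]
  have hsum : Summable fun j ↦ e j * b⁻¹ ^ (j + 1) :=
    .of_norm_bounded (summable_mul_norm_inv_pow_succ hb C) (norm_digit_mul_inv_pow_le hC he)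
  refine ⟨e, he, ?_⟩
  calc fracOfDigits b e = x * b⁻¹ ^ (0 + 1) + ∑' j, d j * b⁻¹ ^ (j + 1 + 1) :=
        hsum.tsum_eq_zero_add
    _ = b⁻¹ * x + b⁻¹ * fracOfDigits b d := by
        rw [fracOfDigits, ← tsum_mul_left]
        congr 1
        · ring
        · exact tsum_congr fun j ↦ by ring
    _ = b⁻¹ * (x + fracOfDigits b d) := (mul_add _ _ _).symm

theorem add_radixTile_eq_univ (hb : 1 < ‖b‖) (hD : IsCompact D) (hΓ : IsClosed Γ)
    (hΓ_digit : ∀ γ ∈ Γ, ∃ x ∈ D, ∃ γ' ∈ Γ, γ = x + b * γ')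
    {C : ℝ} (hC : ∀ z, ∃ γ ∈ Γ, dist γ z ≤ C) : Γ + radixTile b D = Set.univ := by
  have hb0 : b ≠ 0 := norm_pos_iff.1 (one_pos.trans hb)
  obtain ⟨γ₀, hγ₀, -⟩ := hC 0
  obtain ⟨x₀, hx₀, -⟩ := hΓ_digit γ₀ hγ₀
  have ht₀ : fracOfDigits b (fun _ ↦ x₀) ∈ radixTile b D := ⟨_, fun _ ↦ hx₀, rfl⟩
  refine eq_univ_of_isClosed_of_inv_mul_mem hb
    (hΓ.add_right_of_isCompact (isCompact_radixTile hb hD)) ?_ (C := C) fun z ↦ ?_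
  · rintro _ ⟨γ, hγ, t, ht, rfl⟩
    obtain ⟨x, hx, γ', hγ', rfl⟩ := hΓ_digit γ hγ
    refine ⟨γ', hγ', _, inv_mul_add_mem_radixTile hb hD.isBounded hx ht, ?_⟩
    field_simp
    ring
  · obtain ⟨γ, hγ, hdist⟩ := hC (z - fracOfDigits b fun _ ↦ x₀)
    exact ⟨_, Set.add_mem_add hγ ht₀, by rwa [← dist_sub_right _ _ (fracOfDigits b _),
      add_sub_cancel_right]⟩

end FractionalPart

section GaussianRadix

open GaussianInt Polynomial
open scoped Pointwise

/-- The base `-n + i` of the number system, as a Gaussian integer. -/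
def radixBase (n : ℕ) : GaussianInt :=
  ⟨-n, 1⟩

variable {n : ℕ}

lemma toComplex_radixBase (n : ℕ) : toComplex (radixBase n) = -n + Complex.I := by
  simp [radixBase, toComplex_def']

lemma one_lt_norm_toComplex_radixBase (hn : 1 ≤ n) : 1 < ‖toComplex (radixBase n)‖ :=
  calc (1 : ℝ) ≤ |(toComplex (radixBase n)).re| := by simpa [radixBase] using hn
    _ < ‖toComplex (radixBase n)‖ := Complex.abs_re_lt_norm.2 (by simp [radixBase])

lemma not_isUnit_radixBase (hn : 1 ≤ n) : ¬IsUnit (radixBase n) := by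
  rw [← Zsqrtd.norm_eq_one_iff' (by norm_num)]
  have hnorm : (radixBase n).norm = n * n + 1 := by simp [radixBase, Zsqrtd.norm_def]
  have hpos : 0 < n * n := Nat.mul_pos hn hn
  omega

lemma adjoin_radixBase (n : ℕ) : Algebra.adjoin ℕ {radixBase n} = ⊤ := by
  set A := Algebra.adjoin ℕ {radixBase n}
  have hI : (⟨0, 1⟩ : GaussianInt) ∈ A := by
    have : (⟨0, 1⟩ : GaussianInt) = radixBase n + n := by ext <;> simp [radixBase]
    rw [this]
    exact add_mem (Algebra.self_mem_adjoin_singleton _ _) (natCast_mem _ _)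
  have hneg : (-1 : GaussianInt) ∈ A := by
    have : (-1 : GaussianInt) = ⟨0, 1⟩ * ⟨0, 1⟩ := by ext <;> simp
    rw [this]
    exact mul_mem hI hI
  have hintCast (m : ℤ) : (m : GaussianInt) ∈ A := by
    obtain ⟨k, rfl | rfl⟩ := m.eq_nat_or_neg
    · exact_mod_cast natCast_mem A k
    · simpa using mul_mem hneg (natCast_mem A k)
  refine eq_top_iff.2 fun x _ ↦ ?_
  have hx : x = x.re + ⟨0, 1⟩ * x.im := by ext <;> simp
  rw [hx]
  exact add_mem (hintCast _) (mul_mem hI (hintCast _))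

lemma radixBase_succ_mul_aeval (m : ℕ) :
    radixBase (m + 1) * aeval (radixBase (m + 1)) (X ^ 2 + C (2 * m + 1) * X + C (m ^ 2) : ℕ[X]) =
      ((m + 1) ^ 2 + 1 : ℕ) := by
  simp only [map_add, map_mul, map_pow, aeval_X, eq_natCast, map_natCast]
  ext <;> simp [radixBase, pow_two] <;> ring

theorem exists_coeff_le_aeval_radixBase_eq (hn : 1 ≤ n) (x : GaussianInt) :
    ∃ p : ℕ[X], (∀ k, p.coeff k ≤ n ^ 2) ∧ aeval (radixBase n) p = x := by
  obtain ⟨m, rfl⟩ := Nat.exists_eq_add_of_le' hn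
  obtain ⟨f, rfl⟩ : ∃ f : ℕ[X], aeval (radixBase (m + 1)) f = x := by
    rw [← AlgHom.mem_range, ← Algebra.adjoin_singleton_eq_range_aeval, adjoin_radixBase]
    trivial
  simp only [← Nat.lt_add_one_iff]
  refine exists_coeff_lt_aeval_eq (not_isUnit_radixBase hn) (by positivity)
    (radixBase_succ_mul_aeval m) (le_of_eq ?_) f
  simp only [eval_add, eval_mul, eval_pow, eval_X, eval_C]
  ring

lemma isClosed_range_toComplex : IsClosed (Set.range toComplex) := by
  have hrange : Set.range toComplex =
      Set.range ((↑) : ℤ → ℝ) ×ℂ Set.range ((↑) : ℤ → ℝ) := by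
    ext z
    constructor
    · rintro ⟨x, rfl⟩
      exact ⟨⟨x.re, by simp⟩, ⟨x.im, by simp⟩⟩
    · rintro ⟨⟨x, hx⟩, ⟨y, hy⟩⟩
      exact ⟨⟨x, y⟩, Complex.ext (by simpa using hx) (by simpa using hy)⟩
  have hclosed := Int.isClosedEmbedding_coe_real.isClosed_range
  exact hrange ▸ hclosed.reProdIm hclosed

lemma exists_dist_toComplex_le_one (z : ℂ) : ∃ x : GaussianInt, dist (toComplex x) z ≤ 1 := by
  refine ⟨⟨round z.re, round z.im⟩, ?_⟩
  rw [dist_comm, dist_eq_norm]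
  calc ‖z - toComplex ⟨round z.re, round z.im⟩‖
      ≤ |z.re - round z.re| + |z.im - round z.im| := by
        simpa using Complex.norm_le_abs_re_add_abs_im (z - toComplex ⟨round z.re, round z.im⟩)
    _ ≤ 1 / 2 + 1 / 2 := add_le_add (abs_sub_round _) (abs_sub_round _)
    _ = 1 := add_halves 1

theorem range_toComplex_add_radixTile (hn : 1 ≤ n) :
    Set.range toComplex +
      radixTile (-(n : ℂ) + Complex.I) ((↑) '' Set.Iic (n ^ 2)) = Set.univ := by
  rw [← toComplex_radixBase]
  refine add_radixTile_eq_univ (one_lt_norm_toComplex_radixBase hn)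
    ((Set.finite_Iic _).image _).isCompact isClosed_range_toComplex ?_ (C := 1) fun z ↦ ?_
  · rintro _ ⟨x, rfl⟩
    obtain ⟨p, hp, rfl⟩ := exists_coeff_le_aeval_radixBase_eq hn x
    refine ⟨p.coeff 0, ⟨_, hp 0, rfl⟩, _, ⟨aeval (radixBase n) p.divX, rfl⟩, ?_⟩
    conv_lhs => rw [← X_mul_divX_add p]
    simp [add_comm]
  · simpa using exists_dist_toComplex_le_one z

theorem exists_toComplex_eq_sum_range (hn : 1 ≤ n) (x : GaussianInt) :
    ∃ (ℓ : ℕ) (a : ℕ → ℕ), (∀ k, a k ≤ n ^ 2) ∧ (∀ k, ℓ < k → a k = 0) ∧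
      toComplex x = ∑ k ∈ Finset.range (ℓ + 1), (a k : ℂ) * (-(n : ℂ) + Complex.I) ^ k := by
  obtain ⟨p, hp, rfl⟩ := exists_coeff_le_aeval_radixBase_eq hn x
  refine ⟨p.natDegree, p.coeff, hp, fun _ ↦ coeff_eq_zero_of_natDegree_lt, ?_⟩
  simp [aeval_eq_sum_range, toComplex_radixBase]

end GaussianRadix

/-- Kátai–Szabó: for `b = -n + i` with `n ≥ 1`, every complex number `z`
admits a radix expansion `z = d_ℓ b^ℓ + ⋯ + d_0 + ∑_{k≥1} d_{-k} b^{-k}`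
with all digits in `{0,…,n²}`. -/
theorem stmt3 (n : ℕ) (hn : 1 ≤ n) (z : ℂ) :
    ∃ (ℓ : ℕ) (d : ℤ → ℕ), (∀ k, d k ≤ n ^ 2) ∧ (∀ k : ℤ, (ℓ : ℤ) < k → d k = 0) ∧
      z = (∑ k ∈ Finset.range (ℓ + 1), (d k : ℂ) * (-(n : ℂ) + Complex.I) ^ k) +
        ∑' j : ℕ, (d (-(j + 1 : ℤ)) : ℂ) * (-(n : ℂ) + Complex.I) ^ (-(j + 1 : ℤ)) := by
  obtain ⟨_, ⟨x, rfl⟩, _, ⟨e, he, rfl⟩, rfl⟩ :=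
    (range_toComplex_add_radixTile hn).ge (Set.mem_univ z)
  obtain ⟨ℓ, a, ha, ha_zero, hx⟩ := exists_toComplex_eq_sum_range hn x
  choose c hc hce using he
  refine ⟨ℓ, fun | .ofNat k => a k | .negSucc j => c j, ?_, ?_, ?_⟩
  · rintro (k | j)
    exacts [ha k, hc j]
  · rintro (k | j) hk
    exacts [ha_zero k (Int.ofNat_lt.1 hk), absurd hk (by omega)]
  · refine congr_arg₂ _ hx (tsum_congr fun j ↦ ?_)
    rw [← Int.negSucc_eq, zpow_negSucc, ← inv_pow, ← hce]
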